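/- arXiv:1812.08439 — 2 statements merged into one kernel-verified Lean document; each statement's English description precedes it below -/
import Mathlib

section
/- Let H ⊆ 𝔽₂⁸ be the extended Hamming code. Then the lattice Γ_H = (1/√2)·ρ⁻¹(H) ⊆ ℝ⁸ is even (x•x ∈ 2ℤ for all x ∈ Γ_H), unimodular (Γ_H equals its dual lattice {y ∈ ℝ⁸ : y•x ∈ ℤ for all x ∈ Γ_H}), and contains exactly 240 vectors x with x•x = 2 (this is the number of roots of the root system E₈). -/
open scoped BigOperators

/-- The lattice `Γ_C = (1/√2)·ρ⁻¹(C) ⊆ ℝⁿ` associated to a binary code `C ⊆ 𝔽₂ⁿ`,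
where `ρ : ℤⁿ → 𝔽₂ⁿ` is componentwise reduction modulo `2`. -/
def codeLattice {n : ℕ} (C : Set (Fin n → ZMod 2)) : Set (Fin n → ℝ) :=
  {x | ∃ z : Fin n → ℤ, (fun i => (z i : ZMod 2)) ∈ C ∧
      ∀ i, x i = (z i : ℝ) / Real.sqrt 2}

/-- The extended Hamming `[8,4,4]` binary linear code. -/
def extendedHammingCode : Submodule (ZMod 2) (Fin 8 → ZMod 2) :=
  Submodule.span (ZMod 2)
    {![1,1,1,1,0,0,0,0], ![1,1,0,0,1,1,0,0], ![1,0,1,0,1,0,1,0], ![0,1,1,0,1,0,0,1]}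

lemma mem_ham (c : Fin 8 → ZMod 2) : c ∈ extendedHammingCode ↔
    c 0 = c 3 + c 5 + c 6 ∧ c 1 = c 3 + c 5 + c 7 ∧ c 2 = c 3 + c 6 + c 7 ∧
      c 4 = c 5 + c 6 + c 7 := by
  unfold extendedHammingCode
  simp only [Submodule.mem_span_insert, Submodule.mem_span_singleton]
  constructor
  · rintro ⟨a, _, ⟨b, _, ⟨d, _, ⟨e, rfl⟩, rfl⟩, rfl⟩, rfl⟩
    revert a b d e
    decide
  · rintro ⟨h0, h1, h2, h4⟩
    refine ⟨c 3, _, ⟨c 5, _, ⟨c 6, _, ⟨c 7, rfl⟩, rfl⟩, rfl⟩, ?_⟩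
    funext i
    fin_cases i <;> simp <;> (try rw [h0]) <;> (try rw [h1]) <;> (try rw [h2]) <;>
      (try rw [h4]) <;> ring

def Chk (z : Fin 8 → ℤ) : Prop :=
  (z 0 - (z 3 + z 5 + z 6)) % 2 = 0 ∧ (z 1 - (z 3 + z 5 + z 7)) % 2 = 0 ∧
    (z 2 - (z 3 + z 6 + z 7)) % 2 = 0 ∧ (z 4 - (z 5 + z 6 + z 7)) % 2 = 0

lemma zmod_iff (a b : ℤ) : (a : ZMod 2) = (b : ZMod 2) ↔ (a - b) % 2 = 0 := by
  rw [ZMod.intCast_eq_intCast_iff]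
  change a % 2 = b % 2 ↔ _
  omega

lemma mem_ham_int (z : Fin 8 → ℤ) :
    (fun i => (z i : ZMod 2)) ∈ (extendedHammingCode : Set (Fin 8 → ZMod 2)) ↔ Chk z := by
  rw [SetLike.mem_coe, mem_ham, Chk]
  simp only [← zmod_iff]
  push_cast
  rfl

lemma mem_lat (x : Fin 8 → ℝ) :
    x ∈ codeLattice (extendedHammingCode : Set (Fin 8 → ZMod 2)) ↔
      ∃ z : Fin 8 → ℤ, Chk z ∧ ∀ i, x i = (z i : ℝ) / Real.sqrt 2 := by
  simp only [codeLattice, Set.mem_ofPred_eq, mem_ham_int]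

lemma dot_div (z w : Fin 8 → ℤ) :
    ∑ i, (z i : ℝ) / Real.sqrt 2 * ((w i : ℝ) / Real.sqrt 2) = ((∑ i, z i * w i : ℤ) : ℝ) / 2 := by
  push_cast
  rw [Finset.sum_div]
  refine Finset.sum_congr rfl fun i _ => ?_
  rw [div_mul_div_comm, Real.mul_self_sqrt (by norm_num)]

lemma ex_two {a : ℤ} (h : a % 2 = 0) : ∃ k, a = 2 * k := ⟨a / 2, by omega⟩

lemma chk_even (z : Fin 8 → ℤ) (h : Chk z) : ∃ m : ℤ, ∑ i, z i * z i = 4 * m := by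
  obtain ⟨h0, h1, h2, h4⟩ := h
  obtain ⟨a, ha⟩ := ex_two h0
  obtain ⟨b, hb⟩ := ex_two h1
  obtain ⟨c, hc⟩ := ex_two h2
  obtain ⟨d, hd⟩ := ex_two h4
  rw [sub_eq_iff_eq_add] at ha hb hc hd
  simp only [Fin.sum_univ_eight, ha, hb, hc, hd]
  refine ⟨a * a + a * (z 3 + z 5 + z 6) + b * b + b * (z 3 + z 5 + z 7) + c * c
    + c * (z 3 + z 6 + z 7) + d * d + d * (z 5 + z 6 + z 7) + z 3 * z 3 + z 5 * z 5 + z 6 * z 6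
    + z 7 * z 7 + z 3 * z 5 + z 3 * z 6 + z 3 * z 7 + z 5 * z 6 + z 5 * z 7 + z 6 * z 7, ?_⟩
  ring

lemma chk_dot (z w : Fin 8 → ℤ) (h : Chk z) (h' : Chk w) : ∃ m : ℤ, ∑ i, z i * w i = 2 * m := by
  have hs : Chk (fun i => z i + w i) := by
    unfold Chk at *
    dsimp only
    omega
  obtain ⟨a, ha⟩ := chk_even z h
  obtain ⟨b, hb⟩ := chk_even w h'
  obtain ⟨c, hc⟩ := chk_even _ hs
  have : ∑ i, (z i + w i) * (z i + w i)
      = ∑ i, z i * z i + 2 * ∑ i, z i * w i + ∑ i, w i * w i := by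
    rw [Finset.mul_sum, ← Finset.sum_add_distrib, ← Finset.sum_add_distrib]
    exact Finset.sum_congr rfl fun i _ => by ring
  exact ⟨c - a - b, by omega⟩

/-- Integer vectors of squared length `r ≤ 4`. -/
def vecs : ℕ → ℤ → List (List ℤ)
  | 0, r => if r = 0 then [[]] else []
  | n + 1, r => [-2, -1, 0, 1, 2].flatMap fun a =>
      if a * a ≤ r then (vecs n (r - a * a)).map (a :: ·) else []

lemma sq_sum_nonneg (l : List ℤ) : 0 ≤ (l.map fun a => a * a).sum :=
  List.sum_nonneg (by simp only [List.mem_map]; rintro _ ⟨a, _, rfl⟩; exact mul_self_nonneg a)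

lemma mem_vecs (n : ℕ) : ∀ (r : ℤ) (_ : r ≤ 4) (l : List ℤ),
    l ∈ vecs n r ↔ l.length = n ∧ (l.map fun a => a * a).sum = r := by
  induction n with
  | zero =>
    intro r _ l
    rw [vecs, List.length_eq_zero_iff]
    split_ifs with h
    · subst h
      simp only [List.mem_singleton]
      exact ⟨by rintro rfl; simp, fun h => h.1⟩
    · simp only [List.not_mem_nil, false_iff]
      rintro ⟨rfl, h'⟩
      exact h h'.symm
  | succ n ih =>
    intro r hr l
    rw [vecs, List.mem_flatMap]
    constructor
    · rintro ⟨a, -, ha⟩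
      split_ifs at ha with h
      · rw [List.mem_map] at ha
        obtain ⟨l, hl, rfl⟩ := ha
        rw [ih _ (by nlinarith [mul_self_nonneg a])] at hl
        simp [hl.1, hl.2]
      · simp at ha
    · rintro ⟨h1, h2⟩
      cases l with
      | nil => simp at h1
      | cons a l =>
        simp only [List.map_cons, List.sum_cons, List.length_cons] at h1 h2
        have := sq_sum_nonneg l
        have h3 : a ≤ 2 := by nlinarith
        have h4 : -2 ≤ a := by nlinarith
        refine ⟨a, by simp only [List.mem_cons, List.not_mem_nil, or_false]; omega, ?_⟩
        rw [if_pos (by linarith), List.mem_map]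
        exact ⟨l, (ih _ (by nlinarith [mul_self_nonneg a]) l).2 ⟨by omega, by linarith⟩, rfl⟩

def lfun (l : List ℤ) : Fin 8 → ℤ := fun i => l.getD i 0

instance (z : Fin 8 → ℤ) : Decidable (Chk z) := by unfold Chk; infer_instance

def roots : List (List ℤ) := (vecs 8 4).filter fun l => decide (Chk (lfun l))

lemma roots_nodup : roots.Nodup := by decide +kernel

lemma roots_length : roots.length = 240 := by decide +kernel

noncomputable def rfun (l : List ℤ) : Fin 8 → ℝ := fun i => (lfun l i : ℝ) / Real.sqrt 2

lemma lfun_ofFn (z : Fin 8 → ℤ) : lfun (List.ofFn z) = z := by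
  funext i
  fin_cases i <;> simp [lfun]

lemma exists_ofFn (l : List ℤ) (h : l.length = 8) : ∃ z : Fin 8 → ℤ, l = List.ofFn z :=
  ⟨fun i => l.get (i.cast h.symm), by
    apply List.ext_get <;> simp [h, -List.ofFn_succ]⟩

lemma sq_ofFn (z : Fin 8 → ℤ) : ((List.ofFn z).map fun a => a * a).sum = ∑ i, z i * z i := by
  rw [List.map_ofFn, List.sum_ofFn]
  rfl

lemma mem_roots (z : Fin 8 → ℤ) :
    List.ofFn z ∈ roots ↔ ∑ i, z i * z i = 4 ∧ Chk z := by
  rw [roots, List.mem_filter, mem_vecs 8 4 le_rfl, lfun_ofFn, sq_ofFn]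
  simp

lemma roots_eq : {x : Fin 8 → ℝ | x ∈ codeLattice (extendedHammingCode : Set (Fin 8 → ZMod 2)) ∧
    ∑ i, x i * x i = 2} = rfun '' (roots.toFinset : Set (List ℤ)) := by
  ext x
  simp only [Set.mem_ofPred_eq, Set.mem_image, mem_lat, List.coe_toFinset]
  constructor
  · rintro ⟨⟨z, hz, hx⟩, h⟩
    obtain rfl : x = fun i => (z i : ℝ) / Real.sqrt 2 := funext hx
    rw [dot_div] at h
    refine ⟨List.ofFn z, (mem_roots z).2 ⟨?_, hz⟩, ?_⟩
    · have : ((∑ i, z i * z i : ℤ) : ℝ) = ((4 : ℤ) : ℝ) := by push_cast at h ⊢; linarith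
      exact_mod_cast this
    · funext i
      rw [rfun, lfun_ofFn]
  · rintro ⟨l, hl, rfl⟩
    have h8 : l.length = 8 := by
      rw [roots, List.mem_filter, mem_vecs 8 4 le_rfl] at hl
      exact hl.1.1
    obtain ⟨z, rfl⟩ := exists_ofFn l h8
    rw [mem_roots] at hl
    simp only [rfun, lfun_ofFn]
    refine ⟨⟨z, hl.2, fun _ => rfl⟩, ?_⟩
    rw [dot_div, hl.1]
    norm_num

lemma rfun_inj : Set.InjOn rfun (roots.toFinset : Set (List ℤ)) := by
  have h8 : ∀ l ∈ roots, l.length = 8 := by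
    intro l hl
    rw [roots, List.mem_filter, mem_vecs 8 4 le_rfl] at hl
    exact hl.1.1
  intro l hl m hm h
  simp only [List.coe_toFinset, Set.mem_ofPred_eq] at hl hm
  obtain ⟨z, rfl⟩ := exists_ofFn l (h8 l hl)
  obtain ⟨w, rfl⟩ := exists_ofFn m (h8 m hm)
  congr 1
  funext i
  have := congrFun h i
  simp only [rfun, lfun_ofFn] at this
  have h2 : Real.sqrt 2 ≠ 0 := by positivity
  rw [div_left_inj' h2] at this
  exact_mod_cast this

lemma dual_mem (y : Fin 8 → ℝ)
    (h : ∀ x ∈ codeLattice (extendedHammingCode : Set (Fin 8 → ZMod 2)),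
      ∃ m : ℤ, ∑ i, y i * x i = (m : ℝ)) :
    y ∈ codeLattice (extendedHammingCode : Set (Fin 8 → ZMod 2)) := by
  have h' : ∀ z : Fin 8 → ℤ, Chk z → ∃ m : ℤ, ∑ i, y i * ((z i : ℝ) / Real.sqrt 2) = m :=
    fun z hz => h _ ((mem_lat _).2 ⟨z, hz, fun _ => rfl⟩)
  have h2 : Real.sqrt 2 * Real.sqrt 2 = 2 := Real.mul_self_sqrt (by norm_num)
  have h0 : Real.sqrt 2 ≠ 0 := by positivity
  have hw : ∀ i, ∃ w : ℤ, y i = (w : ℝ) / Real.sqrt 2 := by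
    intro i
    obtain ⟨m, hm⟩ := h' (Pi.single i 2) (by revert i; decide)
    refine ⟨m, ?_⟩
    rw [Finset.sum_eq_single i (by intro j _ hj; simp [hj]) (by simp)] at hm
    rw [← hm]
    simp only [Pi.single_eq_same]
    field_simp
    push_cast
    rw [pow_two, h2]
  choose w hw using hw
  obtain rfl : y = fun i => (w i : ℝ) / Real.sqrt 2 := funext hw
  rw [mem_lat]
  refine ⟨w, ?_, fun _ => rfl⟩
  have key : ∀ z : Fin 8 → ℤ, Chk z → ∃ m : ℤ, ∑ i, w i * z i = 2 * m := by
    intro z hz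
    obtain ⟨m, hm⟩ := h' z hz
    rw [dot_div] at hm
    refine ⟨m, ?_⟩
    have : ((∑ i, w i * z i : ℤ) : ℝ) = ((2 * m : ℤ) : ℝ) := by push_cast at hm ⊢; linarith
    exact_mod_cast this
  obtain ⟨a, ha⟩ := key ![1,1,1,1,0,0,0,0] (by decide)
  obtain ⟨b, hb⟩ := key ![1,1,0,0,1,1,0,0] (by decide)
  obtain ⟨c, hc⟩ := key ![1,0,1,0,1,0,1,0] (by decide)
  obtain ⟨d, hd⟩ := key ![0,1,1,0,1,0,0,1] (by decide)
  simp [Fin.sum_univ_eight] at ha hb hc hd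
  unfold Chk
  omega

/-- The lattice `Γ_H` of the extended Hamming code is even, unimodular, and has
exactly `240` roots: this is the number of roots of the root system `E₈`. -/
theorem extendedHamming_lattice_even_unimodular_roots :
    (∀ x ∈ codeLattice (extendedHammingCode : Set (Fin 8 → ZMod 2)),
        ∃ m : ℤ, ∑ i, x i * x i = 2 * (m : ℝ)) ∧
      codeLattice (extendedHammingCode : Set (Fin 8 → ZMod 2)) =
        {y : Fin 8 → ℝ | ∀ x ∈ codeLattice (extendedHammingCode : Set (Fin 8 → ZMod 2)),
          ∃ m : ℤ, ∑ i, y i * x i = (m : ℝ)} ∧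
      ({x : Fin 8 → ℝ | x ∈ codeLattice (extendedHammingCode : Set (Fin 8 → ZMod 2)) ∧
          ∑ i, x i * x i = 2}.Finite ∧
        {x : Fin 8 → ℝ | x ∈ codeLattice (extendedHammingCode : Set (Fin 8 → ZMod 2)) ∧
          ∑ i, x i * x i = 2}.ncard = 240) := by
  refine ⟨?_, ?_, ?_, ?_⟩
  · intro x hx
    obtain ⟨z, hz, hx⟩ := (mem_lat x).1 hx
    obtain rfl : x = fun i => (z i : ℝ) / Real.sqrt 2 := funext hx
    obtain ⟨m, hm⟩ := chk_even z hz
    refine ⟨m, ?_⟩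
    rw [dot_div, hm]
    push_cast
    ring
  · refine Set.Subset.antisymm ?_ dual_mem
    intro y hy x hx
    obtain ⟨z, hz, hx⟩ := (mem_lat x).1 hx
    obtain ⟨w, hw, hy⟩ := (mem_lat y).1 hy
    obtain rfl : x = fun i => (z i : ℝ) / Real.sqrt 2 := funext hx
    obtain rfl : y = fun i => (w i : ℝ) / Real.sqrt 2 := funext hy
    obtain ⟨m, hm⟩ := chk_dot w z hw hz
    refine ⟨m, ?_⟩
    rw [dot_div, hm]
    push_cast
    ring
  · rw [roots_eq]
    exact (Finset.finite_toSet _).image _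
  · rw [roots_eq, Set.InjOn.ncard_image rfun_inj, Set.ncard_coe_finset,
      List.toFinset_card_of_nodup roots_nodup, roots_length]
end

section
/- Let 𝔤 be a finite-dimensional semisimple Lie algebra over an algebraically closed field K of characteristic 0, 𝔥 a Cartan subalgebra, and α a root of 𝔤 relative to 𝔥. Then S_α = 𝔤_α + 𝔤_{−α} + [𝔤_α, 𝔤_{−α}] is a Lie subalgebra of 𝔤 of dimension 3, isomorphic as a Lie algebra to 𝔰𝔩₂(K), the Lie algebra of 2×2 trace-zero matrices over K. -/
/-- The simultaneous eigenspace `𝔤_γ = {x ∈ 𝔤 : [h,x] = γ(h)x for all h ∈ 𝔥}`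
of a subalgebra `𝔥` of a Lie algebra `𝔤`, for a linear functional `γ` on `𝔥`. -/
def simRootSpace {K L : Type*} [CommRing K] [LieRing L] [LieAlgebra K L]
    (H : LieSubalgebra K L) (γ : Module.Dual K H) : Submodule K L where
  carrier := {x | ∀ h : H, ⁅(h : L), x⁆ = γ h • x}
  add_mem' := by
    intro a b ha hb h
    rw [lie_add, ha h, hb h, smul_add]
  zero_mem' := by
    intro h
    rw [lie_zero, smul_zero]
  smul_mem' := by
    intro t x hx h
    rw [lie_smul, hx h, smul_comm]

/-- The subspace `S_γ = 𝔤_γ + 𝔤_{-γ} + [𝔤_γ, 𝔤_{-γ}]` attached to `γ`. -/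
def rootSl2 {K L : Type*} [CommRing K] [LieRing L] [LieAlgebra K L]
    (H : LieSubalgebra K L) (γ : Module.Dual K H) : Submodule K L :=
  simRootSpace H γ ⊔ simRootSpace H (-γ) ⊔
    Submodule.span K
      {z | ∃ x ∈ simRootSpace H γ, ∃ y ∈ simRootSpace H (-γ), z = ⁅x, y⁆}

open LieAlgebra LieModule in
lemma sim_eq_rootSpace
    {K L : Type*} [Field K] [IsAlgClosed K] [CharZero K]
    [LieRing L] [LieAlgebra K L] [Module.Finite K L]
    [LieAlgebra.IsSemisimple K L]
    (H : LieSubalgebra K L) [H.IsCartanSubalgebra]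
    (γ : Module.Dual K H) (x : L) :
    x ∈ simRootSpace H γ ↔ x ∈ rootSpace H (γ : H → K) := by
  constructor
  · intro hx
    apply LieModule.weightSpace_le_genWeightSpace L (γ : H → K)
    rw [LieModule.mem_weightSpace]
    intro h
    exact hx h
  · intro hx h
    exact LieAlgebra.IsKilling.lie_eq_smul_of_mem_rootSpace hx h

lemma mem_sl_two {K : Type*} [Field K] (A : Matrix (Fin 2) (Fin 2) K) :
    A ∈ LieAlgebra.SpecialLinear.sl (Fin 2) K ↔ A.trace = 0 := Iff.rfl

/-- The map from `sl₂` determined by a triple. -/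
def tripleHom {K L : Type*} [Field K] [LieRing L] [LieAlgebra K L] {h e f : L}
    (t : IsSl2Triple h e f) : LieAlgebra.SpecialLinear.sl (Fin 2) K →ₗ⁅K⁆ L where
  toFun A := A.1 0 0 • h + A.1 0 1 • e + A.1 1 0 • f
  map_add' A B := by
    simp [add_smul]; abel
  map_smul' c A := by
    simp [mul_smul]
  map_lie' := by
    intro A B
    have hA : A.1 1 1 = - A.1 0 0 := by
      have := (mem_sl_two _).1 A.2
      rw [Matrix.trace_fin_two] at this
      linear_combination this
    have hB : B.1 1 1 = - B.1 0 0 := by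
      have := (mem_sl_two _).1 B.2
      rw [Matrix.trace_fin_two] at this
      linear_combination this
    have h1 := t.lie_e_f
    have h2 : ⁅f, e⁆ = -h := by rw [← lie_skew, h1]
    have h3 := t.lie_h_e_smul K
    have h4 := t.lie_lie_smul_f K
    have h5 : ⁅e, h⁆ = -((2 : K) • e) := by rw [← lie_skew, h3]
    have h6 : ⁅f, h⁆ = (2 : K) • f := by rw [← lie_skew, h4, neg_neg]
    simp only [LieSubalgebra.coe_bracket, Ring.lie_def, Matrix.sub_apply, Matrix.mul_apply,
      Fin.sum_univ_two, hA, hB, add_lie, lie_add, smul_lie, lie_smul, lie_self, h1, h2, h3, h4,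
      h5, h6]
    module

lemma tripleHom_apply {K L : Type*} [Field K] [LieRing L] [LieAlgebra K L] {h e f : L}
    (t : IsSl2Triple h e f) (A : LieAlgebra.SpecialLinear.sl (Fin 2) K) :
    tripleHom t A = A.1 0 0 • h + A.1 0 1 • e + A.1 1 0 • f := rfl

/-- Coordinates on `sl₂`. -/
def slCoord (K : Type*) [Field K] :
    LieAlgebra.SpecialLinear.sl (Fin 2) K ≃ₗ[K] (Fin 3 → K) where
  toFun A := ![A.1 0 0, A.1 0 1, A.1 1 0]
  map_add' A B := by ext i; fin_cases i <;> simp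
  map_smul' c A := by ext i; fin_cases i <;> simp
  invFun v := ⟨!![v 0, v 1; v 2, - v 0], by
    rw [mem_sl_two, Matrix.trace_fin_two]; simp⟩
  left_inv A := by
    have := (mem_sl_two _).1 A.2
    rw [Matrix.trace_fin_two] at this
    have h2 : A.1 1 1 = - A.1 0 0 := by linear_combination this
    apply Subtype.ext
    ext i j
    fin_cases i <;> fin_cases j <;> simp [h2]
  right_inv v := by ext i; fin_cases i <;> simp

lemma tripleHom_injective {K L : Type*} [Field K] [CharZero K] [LieRing L] [LieAlgebra K L]
    {h e f : L} (t : IsSl2Triple h e f) : Function.Injective (tripleHom (K := K) t) := by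
  rw [injective_iff_map_eq_zero]
  intro A hA
  rw [tripleHom_apply] at hA
  have h3 := t.lie_h_e_smul K
  have h4 := t.lie_lie_smul_f K
  have e1 : A.1 0 1 • (2 : K) • e - A.1 1 0 • (2 : K) • f = 0 := by
    have := congrArg (fun x => ⁅h, x⁆) hA
    simp only [lie_add, lie_smul, lie_self, h3, h4, lie_zero] at this
    rw [← this]; module
  have e2 : A.1 0 1 • (4 : K) • e + A.1 1 0 • (4 : K) • f = 0 := by
    have := congrArg (fun x => ⁅h, x⁆) e1
    simp only [lie_sub, lie_smul, h3, h4, lie_zero] at this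
    rw [← this]; module
  have e3 : ((8 : K) * A.1 0 1) • e = 0 := by
    have : ((8 : K) * A.1 0 1) • e = (2 : K) • (A.1 0 1 • (2 : K) • e - A.1 1 0 • (2 : K) • f)
      + (A.1 0 1 • (4 : K) • e + A.1 1 0 • (4 : K) • f) := by module
    rw [this, e1, e2]; simp
  have h01 : A.1 0 1 = 0 := by simpa [t.e_ne_zero] using e3
  have h10 : A.1 1 0 = 0 := by simpa [t.f_ne_zero, h01] using e2
  have h00 : A.1 0 0 = 0 := by simpa [t.h_ne_zero, h01, h10] using hA
  apply (slCoord K).injective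
  ext i
  fin_cases i <;> simp [slCoord, h01, h10, h00]

/-- For a root `α` of a finite-dimensional semisimple Lie algebra over an algebraically
closed field of characteristic `0`, relative to a Cartan subalgebra, the subspace
`S_α = 𝔤_α + 𝔤_{-α} + [𝔤_α, 𝔤_{-α}]` is a `3`-dimensional Lie subalgebra isomorphic
to `𝔰𝔩₂(K)`. -/
theorem rootSl2_isomorphic_sl2
    {K L : Type*} [Field K] [IsAlgClosed K] [CharZero K]
    [LieRing L] [LieAlgebra K L] [Module.Finite K L]
    [LieAlgebra.IsSemisimple K L]
    (H : LieSubalgebra K L) [H.IsCartanSubalgebra]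
    (α : Module.Dual K H)
    (hα : α ≠ 0 ∧ simRootSpace H α ≠ ⊥) :
    ∃ S : LieSubalgebra K L, S.toSubmodule = rootSl2 H α ∧
      Module.finrank K S = 3 ∧
      Nonempty (S ≃ₗ⁅K⁆ LieAlgebra.SpecialLinear.sl (Fin 2) K) := by
  classical
  obtain ⟨hα0, hne⟩ := hα
  obtain ⟨x, hx, hx0⟩ := (Submodule.ne_bot_iff _).1 hne
  let w : LieModule.Weight K H L := ⟨(α : H → K), by
    intro hbot
    have := (sim_eq_rootSpace H α x).1 hx
    rw [LieAlgebra.rootSpace, hbot] at this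
    exact hx0 (by simpa using this)⟩
  have hw : w.IsNonZero := by
    intro hz
    apply hα0
    ext y
    exact congrFun hz y
  obtain ⟨h, e, f, t, he, hf⟩ := LieAlgebra.IsKilling.exists_isSl2Triple_of_weight_isNonZero hw
  have he' : e ∈ simRootSpace H α := (sim_eq_rootSpace H α e).2 he
  have hf' : f ∈ simRootSpace H (-α) := (sim_eq_rootSpace H (-α) f).2 hf
  have aux {β : LieModule.Weight K H L} (hβ : β.IsNonZero) {y g : L}
      (hy : y ∈ LieAlgebra.rootSpace H β) (hg : g ∈ LieAlgebra.rootSpace H β) (hg0 : g ≠ 0) :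
      ∃ c : K, y = c • g := by
    obtain ⟨c, hc⟩ := (finrank_eq_one_iff_of_nonzero' ⟨g, hg⟩
      (by rwa [ne_eq, LieSubmodule.mk_eq_zero])).mp
        (LieAlgebra.IsKilling.finrank_rootSpace_eq_one β hβ) ⟨y, hy⟩
    exact ⟨c, by simpa using hc.symm⟩
  have hE : ∀ y ∈ simRootSpace H α, ∃ c : K, y = c • e := fun y hy =>
    aux hw ((sim_eq_rootSpace H α y).1 hy) he t.e_ne_zero
  have hF : ∀ y ∈ simRootSpace H (-α), ∃ c : K, y = c • f := fun y hy =>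
    aux (LieModule.Weight.IsNonZero.neg hw) ((sim_eq_rootSpace H (-α) y).1 hy) hf t.f_ne_zero
  have hmem : ∀ a b c : K, a • h + b • e + c • f ∈ (tripleHom (K := K) t).range := by
    intro a b c
    refine ⟨(slCoord K).symm ![a, b, c], ?_⟩
    rw [LieHom.coe_toLinearMap] <;> rw [tripleHom_apply] <;> simp [slCoord]
  have E := LieEquiv.ofInjective (tripleHom (K := K) t) (tripleHom_injective t)
  refine ⟨(tripleHom (K := K) t).range, le_antisymm ?_ ?_, ?_, ⟨E.symm⟩⟩
  · rintro _ ⟨A, rfl⟩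
    change tripleHom t A ∈ _
    rw [tripleHom_apply]
    refine add_mem (add_mem ?_ ?_) ?_
    · exact Submodule.mem_sup_right (Submodule.smul_mem _ _
        (Submodule.subset_span ⟨e, he', f, hf', t.lie_e_f.symm⟩))
    · exact Submodule.mem_sup_left (Submodule.mem_sup_left (Submodule.smul_mem _ _ he'))
    · exact Submodule.mem_sup_left (Submodule.mem_sup_right (Submodule.smul_mem _ _ hf'))
  · refine sup_le (sup_le ?_ ?_) (Submodule.span_le.2 ?_)
    · intro y hy
      obtain ⟨c, rfl⟩ := hE y hy
      simpa using hmem 0 c 0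
    · intro y hy
      obtain ⟨c, rfl⟩ := hF y hy
      simpa using hmem 0 0 c
    · rintro _ ⟨y, hy, z, hz, rfl⟩
      obtain ⟨c, rfl⟩ := hE y hy
      obtain ⟨d, rfl⟩ := hF z hz
      have := hmem (d * c) 0 0
      simpa [t.lie_e_f, smul_smul, mul_comm] using this
  · rw [← LinearEquiv.finrank_eq E.toLinearEquiv, LinearEquiv.finrank_eq (slCoord K)]
    simp
end
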